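/- In the full observation model, define value functions by backward induction on the state (z, θ) ∈ 𝒵 × ∏_i Δ(𝒳^i): V_{T+1} ≡ 0 and, for t = T, T−1,…,1, V_t(z, θ) = min over decision vectors d = (d^1,…,d^n), d^i : 𝒳^i → 𝒰^i, of E[c_t(z, X, U) + V_{t+1}(Z', F_t(θ, Z', U, d))], where X = (X^1,…,X^n) has X^i drawn independently from θ^i, U = (d^1(X^1),…,d^n(X^n)), Z' = f^0_t(z, U, W^0_t) with W^0_t ~ P_{W^0}, and F_t is the deterministic belief-update map for Θ. Then any strategy g̃ with g̃^i_t(x, z, θ) = d^i(x) for some minimizer d of the t-th recursion at (z, θ) is optimal: J(g̃) ≤ J(g) for every control strategy g of the general form U^i_t = g^i_t(Z_{1:t}, X^i_{1:t}, U_{1:t-1}). -/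

import Mathlib

/-!
The proof has three ingredients.

*Conditional independence.* The noise of each stage is fresh: it is independent of everything that
has been observed so far (`sum_fresh`). Consequently the joint law of the histories of shared
states, local states and actions is a common factor `A`, depending only on the shared states and
the actions, times a product over the subsystems of weights `B` (`expect_hist`). Given the common
information, the local histories of different subsystems are therefore independent, and the belief
`Θⁱ_t` is the normalization of the weight `Mf` of subsystem `i` alone (`Theta_eq`).

*Reduction to coordinator strategies.* The factorization makes the total cost multilinear in the
weights `Nf` of the individual stations (`J_eq`). With the other stations fixed, each station
faces a finite-horizon dynamic program in which its local state is Markov given the common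
information, so its law may be replaced by one that uses only its current local state and the
common information without raising the cost (`station_improve`, `improve_one`). Doing this for
one station after another gives `exists_coord`: every strategy is at least as costly as some
strategy whose decision vectors are functions of the common information.

*Telescoping.* For a coordinator strategy the beliefs evolve by the given update map `F`
(`thetaC_succ`), and the one-step identity `cost_add_val`, with `V_le`, bounds the expected stage
cost below by the decrease of the expected value function. Summing over the stages, the cost is at least the
expected initial value at `(Z₁, P_{X|Z}(·|Z₁))`. The strategy that minimizes in the recursion attains
equality at each stage, because the belief it computes recursively is almost surely the true one.
-/

open scoped Classical

namespace ControlSharing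

variable {n T : ℕ}
variable {Z : Type} [Fintype Z] [Nonempty Z]
variable {X : Fin n → Type} [∀ i, Fintype (X i)] [∀ i, Nonempty (X i)]
variable {U : Fin n → Type} [∀ i, Fintype (U i)] [∀ i, Nonempty (U i)]
variable {W0 : Type} [Fintype W0] [Nonempty W0]
variable {W : Fin n → Type} [∀ i, Fintype (W i)] [∀ i, Nonempty (W i)]

/-- A probability weight function on a finite type. -/
def IsLaw {α : Type} [Fintype α] (P : α → ℝ) : Prop :=
  (∀ a, 0 ≤ P a) ∧ ∑ a, P a = 1

/-- Sample space of primitive random variables: the initial shared state `Z₁`, the initial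
local states `X₁ⁱ`, the shared-dynamics noises `W⁰_t` and the local noises `Wⁱ_t`. -/
abbrev Omega (T : ℕ) (Z : Type) (X : Fin n → Type) (W0 : Type) (W : Fin n → Type) : Type :=
  Z × (∀ i, X i) × (Fin T → W0) × (∀ i, Fin T → W i)

/-- The probability weight of a sample point: `Z₁ ~ P_Z`; conditionally on `Z₁` the initial
local states are independent, `X₁ⁱ ~ P_{Xⁱ|Z}(·|Z₁)`; all noises are independent with laws
`P_{W⁰}`, `P_{Wⁱ}`, independent of the initial states. -/
noncomputable def weight (PZ : Z → ℝ) (PX : ∀ i, Z → X i → ℝ) (PW0 : W0 → ℝ)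
    (PW : ∀ i, W i → ℝ) (ω : Omega T Z X W0 W) : ℝ :=
  PZ ω.1 * (∏ i, PX i ω.1 (ω.2.1 i)) * (∏ t, PW0 (ω.2.2.1 t)) *
    (∏ i, ∏ t, PW i (ω.2.2.2 i t))

/-- A general control strategy: station `i` chooses `Uⁱ_t = gⁱ_t(Z_{1:t}, Xⁱ_{1:t}, U_{1:t-1})`. -/
def Strategy (Z : Type) (X U : Fin n → Type) : Type :=
  ∀ (i : Fin n) (t : ℕ), (Fin (t + 1) → Z) → (Fin (t + 1) → X i) →
    (Fin t → ∀ j, U j) → U i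

variable (f0 : ℕ → Z → (∀ j, U j) → W0 → Z)
variable (f : ∀ i, ℕ → Z → X i → (∀ j, U j) → W i → X i)

/-- The closed-loop trajectory: histories `(Z_{1:t+1}, X_{1:t+1}, U_{1:t+1})` generated by the
dynamics `Z_{t+1} = f⁰_t(Z_t, U_t, W⁰_t)`, `Xⁱ_{t+1} = fⁱ_t(Z_t, Xⁱ_t, U_t, Wⁱ_t)` and the
strategy `g`. -/
noncomputable def traj (g : Strategy Z X U) (ω : Omega T Z X W0 W) :
    (t : ℕ) → (Fin (t + 1) → Z) × (∀ i, Fin (t + 1) → X i) × (Fin (t + 1) → ∀ j, U j)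
  | 0 =>
    let zh : Fin 1 → Z := fun _ => ω.1
    let xh : ∀ i, Fin 1 → X i := fun i _ => ω.2.1 i
    ⟨zh, xh, fun _ j => g j 0 zh (xh j) (fun s => s.elim0)⟩
  | t + 1 =>
    let prev := traj g ω t
    let ucur := prev.2.2 (Fin.last t)
    let znew := f0 t (prev.1 (Fin.last t)) ucur
      (if h : t < T then ω.2.2.1 ⟨t, h⟩ else Classical.arbitrary W0)
    let xnew : ∀ i, X i := fun i =>
      f i t (prev.1 (Fin.last t)) (prev.2.1 i (Fin.last t)) ucur
        (if h : t < T then ω.2.2.2 i ⟨t, h⟩ else Classical.arbitrary (W i))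
    let zh : Fin (t + 2) → Z := Fin.snoc prev.1 znew
    let xh : ∀ i, Fin (t + 2) → X i := fun i => Fin.snoc (prev.2.1 i) (xnew i)
    ⟨zh, xh, Fin.snoc prev.2.2 (fun j => g j (t + 1) zh (xh j) prev.2.2)⟩

/-- The shared state process `Z_t`. -/
noncomputable def Zp (g : Strategy Z X U) (t : ℕ) (ω : Omega T Z X W0 W) : Z :=
  (traj f0 f g ω t).1 (Fin.last t)

/-- The local state process `Xⁱ_t`. -/
noncomputable def Xp (g : Strategy Z X U) (i : Fin n) (t : ℕ) (ω : Omega T Z X W0 W) : X i :=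
  (traj f0 f g ω t).2.1 i (Fin.last t)

/-- The action process `Uⁱ_t`. -/
noncomputable def Up (g : Strategy Z X U) (i : Fin n) (t : ℕ) (ω : Omega T Z X W0 W) : U i :=
  (traj f0 f g ω t).2.2 (Fin.last t) i

/-- Probability of an event under a weight function. -/
noncomputable def Pr {Ω : Type} [Fintype Ω] (μ : Ω → ℝ) (A : Ω → Prop) : ℝ :=
  ∑ ω : Ω, if A ω then μ ω else 0

/-- Conditional probability `P(A | B)`. -/
noncomputable def CondPr {Ω : Type} [Fintype Ω] (μ : Ω → ℝ) (A B : Ω → Prop) : ℝ :=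
  Pr μ (fun ω => A ω ∧ B ω) / Pr μ B

/-- Conditional expectation `E[h | B]`. -/
noncomputable def CondExp {Ω : Type} [Fintype Ω] (μ : Ω → ℝ) (h : Ω → ℝ) (B : Ω → Prop) : ℝ :=
  (∑ ω : Ω, if B ω then μ ω * h ω else 0) / Pr μ B

/-- The expected total cost `J(g) = E[∑_{t=1}^T c_t(Z_t, X_t, U_t)]`. -/
noncomputable def J (c : ℕ → Z → (∀ i, X i) → (∀ i, U i) → ℝ)
    (μ : Omega T Z X W0 W → ℝ) (g : Strategy Z X U) : ℝ :=
  ∑ ω : Omega T Z X W0 W, μ ω *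
    ∑ t ∈ Finset.range T,
      c t (Zp f0 f g t ω) (fun i => Xp f0 f g i t ω) (fun i => Up f0 f g i t ω)


/-- A coordinator-form strategy: `Uⁱ_t = Dⁱ_t(Xⁱ_t)` where the decision rule
`Dⁱ_t : 𝒳ⁱ → 𝒰ⁱ` is a function of the common information `C_t = (Z_{1:t}, U_{1:t-1})`. -/
def CoordStrategy (Z : Type) (X U : Fin n → Type) : Type :=
  ∀ (i : Fin n) (t : ℕ), (Fin (t + 1) → Z) → (Fin t → ∀ j, U j) → (X i → U i)

/-- The control strategy induced by a coordinator-form strategy. -/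
def ofCoord (d : CoordStrategy Z X U) : Strategy Z X U :=
  fun i t zh xh uh => d i t zh uh (xh (Fin.last t))

/-- The belief `Θⁱ_t` of the coordinator: the conditional distribution of the local state
`Xⁱ_t` given the common information `C_t = (Z_{1:t}, U_{1:t-1})` realized at `ω`. -/
noncomputable def Theta (μ : Omega T Z X W0 W → ℝ) (g : Strategy Z X U) (i : Fin n) (t : ℕ)
    (ω : Omega T Z X W0 W) : X i → ℝ := fun x =>
  CondPr μ (fun ω' => Xp f0 f g i t ω' = x)
    (fun ω' => (∀ s ≤ t, Zp f0 f g s ω' = Zp f0 f g s ω) ∧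
      (∀ s < t, ∀ j, Up f0 f g j s ω' = Up f0 f g j s ω))

/-- The realized decision rule `Dⁱ_t` (prescribed by the coordinator-form strategy `d`)
along the trajectory at `ω`. -/
noncomputable def Dp (d : CoordStrategy Z X U) (i : Fin n) (t : ℕ)
    (ω : Omega T Z X W0 W) : X i → U i :=
  d i t (fun s : Fin (t + 1) => Zp f0 f (ofCoord d) s ω)
    (fun (s : Fin t) (j : Fin n) => Up f0 f (ofCoord d) j s ω)

/-- The quantity minimized in the dynamic-programming recursion at time `t`, state `(z, θ)`,
decision vector `dvec` and value-to-go `Vnext`: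
`E[c_t(z, X, U) + V_{t+1}(Z', F_t(θ, Z', U, dvec))]`, where the `Xⁱ` are independent with
`Xⁱ ~ θⁱ`, `U = (dvec¹(X¹), …, dvecⁿ(Xⁿ))` and `Z' = f⁰_t(z, U, W⁰_t)`, `W⁰_t ~ P_{W⁰}`. -/
noncomputable def Qval (PW0 : W0 → ℝ) (c : ℕ → Z → (∀ i, X i) → (∀ i, U i) → ℝ)
    (F : ℕ → (∀ i, X i → ℝ) → Z → (∀ j, U j) → (∀ i, X i → U i) → (∀ i, X i → ℝ))
    (Vnext : Z → (∀ i, X i → ℝ) → ℝ) (t : ℕ) (z : Z) (θ : ∀ i, X i → ℝ)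
    (dvec : ∀ i, X i → U i) : ℝ :=
  ∑ x : ∀ i, X i, (∏ i, θ i (x i)) *
    ∑ w0 : W0, PW0 w0 *
      (c t z x (fun j => dvec j (x j)) +
        Vnext (f0 t z (fun j => dvec j (x j)) w0)
          (F t θ (f0 t z (fun j => dvec j (x j)) w0) (fun j => dvec j (x j)) dvec))

/-- The value functions of the dynamic program, defined by backward induction:
`V_t ≡ 0` for `t ≥ T` and `V_t(z, θ) = min_{dvec} Qval(V_{t+1}, t, z, θ, dvec)` for `t < T`. -/
noncomputable def V (T : ℕ) (PW0 : W0 → ℝ) (c : ℕ → Z → (∀ i, X i) → (∀ i, U i) → ℝ)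
    (F : ℕ → (∀ i, X i → ℝ) → Z → (∀ j, U j) → (∀ i, X i → U i) → (∀ i, X i → ℝ))
    (t : ℕ) (z : Z) (θ : ∀ i, X i → ℝ) : ℝ :=
  if _h : t < T then
    ⨅ dvec : ∀ i, X i → U i,
      Qval f0 PW0 c F (fun z' θ' => V T PW0 c F (t + 1) z' θ') t z θ dvec
  else 0
termination_by T - t
decreasing_by omega

/-- The belief on the local states determined recursively from a history of common
information by the update map `F` (with `Θ₁ⁱ = P_{Xⁱ|Z}(·|Z₁)`), for the strategy induced by
the functions `h i t : 𝒳ⁱ × 𝒵 × beliefs → 𝒰ⁱ`. -/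
noncomputable def beliefOfHist (PX : ∀ i, Z → X i → ℝ)
    (F : ℕ → (∀ i, X i → ℝ) → Z → (∀ j, U j) → (∀ i, X i → U i) → (∀ i, X i → ℝ))
    (h : ∀ i : Fin n, ℕ → X i → Z → (∀ j, X j → ℝ) → U i) :
    (t : ℕ) → (Fin (t + 1) → Z) → (Fin t → ∀ j, U j) → (∀ i, X i → ℝ)
  | 0, zh, _ => fun i x => PX i (zh 0) x
  | t + 1, zh, uh =>
    let θ := beliefOfHist PX F h t (fun s => zh s.castSucc) (fun s => uh s.castSucc)
    F t θ (zh (Fin.last (t + 1))) (uh (Fin.last t))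
      (fun i x => h i t x (zh (Fin.last t).castSucc) θ)

set_option linter.unusedSectionVars false

section Aux

variable (PZ : Z → ℝ) (PX : ∀ i, Z → X i → ℝ) (PW0 : W0 → ℝ) (PW : ∀ i, W i → ℝ)

/-! ### Fresh noise -/

theorem prod_update_swap {ι α : Type} [Fintype ι] [DecidableEq ι] (P : α → ℝ) (a : ι → α) (t : ι) (w : α) :
    (∏ s, P (Function.update a t w s)) * P (a t) = (∏ s, P (a s)) * P w := by
  rw [← Finset.mul_prod_erase Finset.univ _ (Finset.mem_univ t),
    ← Finset.mul_prod_erase Finset.univ (fun s => P (a s)) (Finset.mem_univ t)]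
  have : ∏ x ∈ Finset.univ.erase t, P (Function.update a t w x) =
      ∏ x ∈ Finset.univ.erase t, P (a x) := by
    refine Finset.prod_congr rfl fun x hx => ?_
    rw [Function.update_of_ne (Finset.ne_of_mem_erase hx)]
  rw [this, Function.update_self]
  ring

/-- The sample point `ω` with all time-`t` noises replaced by `v`. -/
noncomputable def upd (t : Fin T) (ω : Omega T Z X W0 W) (v : W0 × ∀ i, W i) :
    Omega T Z X W0 W :=
  (ω.1, ω.2.1, Function.update ω.2.2.1 t v.1, fun i => Function.update (ω.2.2.2 i) t (v.2 i))

/-- All time-`t` noises at `ω`. -/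
def noiseAt (t : Fin T) (ω : Omega T Z X W0 W) : W0 × ∀ i, W i :=
  (ω.2.2.1 t, fun i => ω.2.2.2 i t)

/-- The joint law of the noises at one time. -/
def noiseLaw (v : W0 × ∀ i, W i) : ℝ := PW0 v.1 * ∏ i, PW i (v.2 i)

theorem weight_upd (t : Fin T) (ω : Omega T Z X W0 W) (v : W0 × ∀ i, W i) :
    weight PZ PX PW0 PW (upd t ω v) * noiseLaw PW0 PW (noiseAt t ω) =
      weight PZ PX PW0 PW ω * noiseLaw PW0 PW v := by
  have h0 := prod_update_swap PW0 ω.2.2.1 t v.1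
  have h1 : (∏ i, ∏ s, PW i (Function.update (ω.2.2.2 i) t (v.2 i) s)) *
      (∏ i, PW i (ω.2.2.2 i t)) = (∏ i, ∏ s, PW i (ω.2.2.2 i s)) * ∏ i, PW i (v.2 i) := by
    rw [← Finset.prod_mul_distrib, ← Finset.prod_mul_distrib]
    exact Finset.prod_congr rfl fun i _ => prod_update_swap (PW i) (ω.2.2.2 i) t (v.2 i)
  simp only [weight, noiseLaw, noiseAt, upd]
  calc _ = PZ ω.1 * (∏ i, PX i ω.1 (ω.2.1 i)) *
        ((∏ s, PW0 (Function.update ω.2.2.1 t v.1 s)) * PW0 (ω.2.2.1 t)) *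
        ((∏ i, ∏ s, PW i (Function.update (ω.2.2.2 i) t (v.2 i) s)) *
          (∏ i, PW i (ω.2.2.2 i t))) := by ring
    _ = _ := by rw [h0, h1]; ring

theorem sum_noiseLaw (hPW0 : IsLaw PW0) (hPW : ∀ i, IsLaw (PW i)) :
    ∑ v : W0 × ∀ i, W i, noiseLaw PW0 PW v = 1 := by
  simp only [noiseLaw, Fintype.sum_prod_type, ← Finset.mul_sum, ← Finset.sum_mul]
  rw [hPW0.2, one_mul, ← Fintype.prod_sum]
  exact Finset.prod_eq_one fun i _ => (hPW i).2

/-- The time-`t` noises are independent of every function of the other primitive variables: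
they can be integrated out separately. The exchange `(ω, v) ↦ (upd t ω v, noiseAt t ω)` is a
measure-preserving involution. -/
theorem sum_fresh (hPW0 : IsLaw PW0) (hPW : ∀ i, IsLaw (PW i)) (t : Fin T)
    (φ : Omega T Z X W0 W → (W0 × ∀ i, W i) → ℝ)
    (hφ : ∀ ω v v', φ (upd t ω v) v' = φ ω v') :
    ∑ ω, weight PZ PX PW0 PW ω * φ ω (noiseAt t ω) =
      ∑ ω, weight PZ PX PW0 PW ω * ∑ v, noiseLaw PW0 PW v * φ ω v := by
  have hupd : ∀ (ω : Omega T Z X W0 W) v, noiseAt t (upd t ω v) = v := by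
    intro ω v; simp [noiseAt, upd]
  let e : (Omega T Z X W0 W × (W0 × ∀ i, W i)) ≃ (Omega T Z X W0 W × (W0 × ∀ i, W i)) :=
    Function.Involutive.toPerm (fun p => (upd t p.1 p.2, noiseAt t p.1)) (by
      rintro ⟨ω, v⟩
      simp only [hupd]
      simp [noiseAt, upd])
  calc _ = ∑ p : Omega T Z X W0 W × (W0 × ∀ i, W i),
        weight PZ PX PW0 PW p.1 * noiseLaw PW0 PW p.2 * φ p.1 (noiseAt t p.1) := by
        symm
        rw [Fintype.sum_prod_type]
        refine Finset.sum_congr rfl fun ω _ => ?_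
        dsimp only
        rw [← Finset.sum_mul, ← Finset.mul_sum, sum_noiseLaw PW0 PW hPW0 hPW, mul_one]
    _ = ∑ p : Omega T Z X W0 W × (W0 × ∀ i, W i),
        weight PZ PX PW0 PW p.1 * noiseLaw PW0 PW p.2 * φ p.1 p.2 := by
        rw [← Equiv.sum_comp e (fun p => weight PZ PX PW0 PW p.1 *
          noiseLaw PW0 PW p.2 * φ p.1 (noiseAt t p.1))]
        refine Finset.sum_congr rfl fun p _ => ?_
        change weight PZ PX PW0 PW (upd t p.1 p.2) * noiseLaw PW0 PW (noiseAt t p.1) *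
          φ (upd t p.1 p.2) (noiseAt t (upd t p.1 p.2)) = _
        rw [weight_upd, hφ, hupd]
    _ = _ := by
        rw [Fintype.sum_prod_type]
        refine Finset.sum_congr rfl fun ω _ => ?_
        rw [Finset.mul_sum]
        exact Finset.sum_congr rfl fun v _ => by ring

theorem traj_upd (g : Strategy Z X U) (t : Fin T) (ω : Omega T Z X W0 W) (v : W0 × ∀ i, W i)
    (s : ℕ) (hs : s ≤ t) : traj f0 f g (upd t ω v) s = traj f0 f g ω s := by
  induction s with
  | zero => simp [traj, upd]
  | succ s ih =>
    have hs' : s < T := by omega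
    have hne : (⟨s, hs'⟩ : Fin T) ≠ t := by
      intro e; rw [← e] at hs; simp at hs
    simp only [traj, ih (by omega), hs', dite_true]
    simp [upd, Function.update_of_ne hne]

/-! ### Histories of the closed loop -/

/-- The shared-state history `Z_{1:t}`. -/
noncomputable def Zh (g : Strategy Z X U) (t : ℕ) (ω : Omega T Z X W0 W) : Fin (t + 1) → Z :=
  (traj f0 f g ω t).1

/-- The local-state histories `Xⁱ_{1:t}`. -/
noncomputable def Xh (g : Strategy Z X U) (t : ℕ) (ω : Omega T Z X W0 W) :
    ∀ i, Fin (t + 1) → X i :=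
  (traj f0 f g ω t).2.1

/-- The strict action history `U_{1:t-1}`. -/
noncomputable def Uh (g : Strategy Z X U) (t : ℕ) (ω : Omega T Z X W0 W) :
    Fin t → ∀ j, U j :=
  fun s => (traj f0 f g ω t).2.2 s.castSucc

theorem traj_last (g : Strategy Z X U) (t : ℕ) (ω : Omega T Z X W0 W) :
    (traj f0 f g ω t).2.2 (Fin.last t) =
      fun j => g j t (Zh f0 f g t ω) (Xh f0 f g t ω j) (Uh f0 f g t ω) := by
  cases t with
  | zero =>
    funext j
    simp only [traj, Zh, Xh]
    congr 1
    funext s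
    exact s.elim0
  | succ t =>
    funext j
    have hU : Uh f0 f g (t + 1) ω = (traj f0 f g ω t).2.2 := by
      funext s; simp [Uh, traj]
    rw [hU]
    simp only [traj, Zh, Xh, Fin.snoc_last]

/-- The control law of station `i` under the strategy `g`. -/
def stn (g : Strategy Z X U) (i : Fin n) :
    ∀ t : ℕ, (Fin (t + 1) → Z) → (Fin (t + 1) → X i) → (Fin t → ∀ j, U j) → U i :=
  g i

theorem Up_eq (g : Strategy Z X U) (t : ℕ) (ω : Omega T Z X W0 W) (j : Fin n) :
    Up f0 f g j t ω = stn g j t (Zh f0 f g t ω) (Xh f0 f g t ω j) (Uh f0 f g t ω) :=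
  congrFun (traj_last f0 f g t ω) j

theorem Uh_succ (g : Strategy Z X U) (t : ℕ) (ω : Omega T Z X W0 W) :
    Uh f0 f g (t + 1) ω = Fin.snoc (Uh f0 f g t ω) (fun j => Up f0 f g j t ω) := by
  funext s
  refine Fin.lastCases ?_ (fun s => ?_) s
  · simp [Uh, traj, Up]
  · simp [Uh, traj]

theorem Zh_succ (g : Strategy Z X U) (t : Fin T) (ω : Omega T Z X W0 W) :
    Zh f0 f g (t + 1) ω = Fin.snoc (Zh f0 f g t ω)
      (f0 t (Zh f0 f g t ω (Fin.last t)) (fun j => Up f0 f g j t ω) (noiseAt t ω).1) := by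
  simp only [Zh, traj, t.2, dite_true]; rfl

theorem Xh_succ (g : Strategy Z X U) (t : Fin T) (ω : Omega T Z X W0 W) (i : Fin n) :
    Xh f0 f g (t + 1) ω i = Fin.snoc (Xh f0 f g t ω i)
      (f i t (Zh f0 f g t ω (Fin.last t)) (Xh f0 f g t ω i (Fin.last t))
        (fun j => Up f0 f g j t ω) ((noiseAt t ω).2 i)) := by
  simp only [Xh, traj, t.2, dite_true]; rfl

theorem Zh_apply (g : Strategy Z X U) (t : ℕ) (ω : Omega T Z X W0 W) (s : Fin (t + 1)) :
    Zh f0 f g t ω s = Zp f0 f g s ω := by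
  induction t with
  | zero => obtain rfl : s = 0 := Fin.fin_one_eq_zero s; rfl
  | succ t ih =>
    refine Fin.lastCases ?_ (fun s => ?_) s
    · rfl
    · rw [← show _ = Zp f0 f g (s.castSucc : Fin (t + 2)) ω from ih s]
      simp [Zh, traj]

theorem Uh_apply (g : Strategy Z X U) (t : ℕ) (ω : Omega T Z X W0 W) (s : Fin t) (j : Fin n) :
    Uh f0 f g t ω s j = Up f0 f g j s ω := by
  induction t with
  | zero => exact s.elim0
  | succ t ih =>
    rw [Uh_succ]
    refine Fin.lastCases ?_ (fun s => ?_) s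
    · simp
    · simp [ih]

/-- The common-information event in the definition of the belief is equality of histories. -/
theorem common_iff (g : Strategy Z X U) (t : ℕ) (ω ω' : Omega T Z X W0 W) :
    ((∀ s ≤ t, Zp f0 f g s ω' = Zp f0 f g s ω) ∧
      (∀ s < t, ∀ j, Up f0 f g j s ω' = Up f0 f g j s ω)) ↔
    (Zh f0 f g t ω' = Zh f0 f g t ω ∧ Uh f0 f g t ω' = Uh f0 f g t ω) := by
  constructor
  · rintro ⟨h1, h2⟩
    refine ⟨funext fun s => ?_, funext fun s => funext fun j => ?_⟩
    · rw [Zh_apply, Zh_apply]; exact h1 s (by omega)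
    · rw [Uh_apply, Uh_apply]; exact h2 s s.2 j
  · rintro ⟨h1, h2⟩
    refine ⟨fun s hs => ?_, fun s hs j => ?_⟩
    · have := congrFun h1 ⟨s, by omega⟩
      rwa [Zh_apply, Zh_apply] at this
    · have := congrFun (congrFun h2 ⟨s, hs⟩) j
      rwa [Uh_apply, Uh_apply] at this

/-! ### Finite-sum identities -/

theorem sum_push {α β : Type} [Fintype α] [Fintype β] (F : α → β) (P : α → ℝ) (φ : β → ℝ) :
    ∑ b, (∑ a, if F a = b then P a else 0) * φ b = ∑ a, P a * φ (F a) := by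
  simp only [Finset.sum_mul]
  rw [Finset.sum_comm]
  refine Finset.sum_congr rfl fun a _ => ?_
  simp [ite_mul]

theorem sum_push_pi {α β : Fin n → Type} [∀ i, Fintype (α i)] [∀ i, Fintype (β i)]
    (F : ∀ i, α i → β i) (P : ∀ i, α i → ℝ) (φ : (∀ i, β i) → ℝ) :
    ∑ b : ∀ i, β i, (∏ i, ∑ a, if F i a = b i then P i a else 0) * φ b =
      ∑ a : ∀ i, α i, (∏ i, P i (a i)) * φ (fun i => F i (a i)) := by
  rw [← sum_push (fun (a : ∀ i, α i) i => F i (a i)) (fun a => ∏ i, P i (a i)) φ]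
  refine Finset.sum_congr rfl fun b _ => ?_
  rw [Fintype.prod_sum]
  congr 1
  refine Finset.sum_congr rfl fun a _ => ?_
  rw [Finset.prod_ite_zero]
  simp [funext_iff]

theorem sum_snoc {α : Type} [Fintype α] (k : ℕ) (φ : (Fin (k + 1) → α) → ℝ) :
    ∑ p, φ p = ∑ p : Fin k → α, ∑ a : α, φ (Fin.snoc (α := fun _ => α) p a) := by
  rw [← Equiv.sum_comp (Fin.snocEquiv (fun _ : Fin (k + 1) => α)) φ, Fintype.sum_prod_type,
    Finset.sum_comm]
  rfl

theorem sum_snoc_pi {α : Fin n → Type} [∀ i, Fintype (α i)] (k : ℕ)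
    (φ : (∀ i, Fin (k + 1) → α i) → ℝ) :
    ∑ p, φ p = ∑ p : ∀ i, Fin k → α i, ∑ a : ∀ i, α i,
      φ (fun i => Fin.snoc (α := fun _ => α i) (p i) (a i)) := by
  let e : ((∀ i, Fin k → α i) × (∀ i, α i)) ≃ (∀ i, Fin (k + 1) → α i) :=
    { toFun := fun q i => Fin.snoc (α := fun _ => α i) (q.1 i) (q.2 i)
      invFun := fun p => (fun i s => p i s.castSucc, fun i => p i (Fin.last k))
      left_inv := fun q => by simp
      right_inv := fun p => by
        funext i
        exact Fin.snoc_init_self (p i) }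
  rw [← Equiv.sum_comp e φ, Fintype.sum_prod_type]
  rfl

/-! ### Factorization of the law of the histories -/

/-- Transition kernel of the shared state. -/
noncomputable def K0 (t : ℕ) (z : Z) (u : ∀ j, U j) (z' : Z) : ℝ :=
  ∑ w, if f0 t z u w = z' then PW0 w else 0

/-- Transition kernel of the local state of subsystem `i`. -/
noncomputable def Ki (i : Fin n) (t : ℕ) (z : Z) (x : X i) (u : ∀ j, U j) (x' : X i) : ℝ :=
  ∑ w, if f i t z x u w = x' then PW i w else 0

/-- The strategy-independent factor, contributed by the shared state, of the probability of a
history of common information. -/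
noncomputable def A : (t : ℕ) → (Fin (t + 1) → Z) → (Fin t → ∀ j, U j) → ℝ
  | 0, zh, _ => PZ (zh 0)
  | t + 1, zh, uh => A t (fun s => zh s.castSucc) (fun s => uh s.castSucc) *
      K0 f0 PW0 t (zh (Fin.last t).castSucc) (uh (Fin.last t)) (zh (Fin.last (t + 1)))

/-- The factor contributed by subsystem `i`, controlled by the station strategy `gi`: the
probability of generating the local history `xh` and of choosing the `i`-th components of `uh`,
when `zh` and `uh` are prescribed exogenously. -/
noncomputable def B (i : Fin n)
    (gi : ∀ t : ℕ, (Fin (t + 1) → Z) → (Fin (t + 1) → X i) → (Fin t → ∀ j, U j) → U i) :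
    (t : ℕ) → (Fin (t + 1) → Z) → (Fin t → ∀ j, U j) → (Fin (t + 1) → X i) → ℝ
  | 0, zh, _, xh => PX i (zh 0) (xh 0)
  | t + 1, zh, uh, xh =>
      B i gi t (fun s => zh s.castSucc) (fun s => uh s.castSucc) (fun s => xh s.castSucc) *
      ((if gi t (fun s => zh s.castSucc) (fun s => xh s.castSucc) (fun s => uh s.castSucc) =
          uh (Fin.last t) i then 1 else 0) *
        Ki f PW i t (zh (Fin.last t).castSucc) (xh (Fin.last t).castSucc) (uh (Fin.last t))
          (xh (Fin.last (t + 1))))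

theorem step_sum (t : ℕ) (z : Z) (x : ∀ i, X i) (ug : ∀ j, U j)
    (φ : Z → (∀ j, U j) → (∀ i, X i) → ℝ) :
    ∑ z', ∑ u, ∑ x' : ∀ i, X i, (K0 f0 PW0 t z u z' * ∏ i, ((if ug i = u i then 1 else 0) *
      Ki f PW i t z (x i) u (x' i))) * φ z' u x' =
    ∑ v : W0 × ∀ i, W i, noiseLaw PW0 PW v *
      φ (f0 t z ug v.1) ug (fun i => f i t z (x i) ug (v.2 i)) := by
  have h1 : ∀ u : ∀ j, U j, (∏ i, (if ug i = u i then (1 : ℝ) else 0)) =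
      if ug = u then 1 else 0 := by
    intro u
    rw [Finset.prod_ite_zero]
    simp [funext_iff]
  have h2 : ∀ z', ∑ u, ∑ x' : ∀ i, X i, (K0 f0 PW0 t z u z' *
      ∏ i, ((if ug i = u i then 1 else 0) * Ki f PW i t z (x i) u (x' i))) * φ z' u x' =
      K0 f0 PW0 t z ug z' * ∑ w : ∀ i, W i, (∏ i, PW i (w i)) *
        φ z' ug (fun i => f i t z (x i) ug (w i)) := by
    intro z'
    rw [Finset.sum_eq_single ug]
    · rw [← sum_push_pi (fun i => f i t z (x i) ug) PW (φ z' ug), Finset.mul_sum]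
      refine Finset.sum_congr rfl fun x' _ => ?_
      simp [Ki, mul_assoc]
    · intro u _ hu
      refine Finset.sum_eq_zero fun x' _ => ?_
      rw [Finset.prod_mul_distrib, h1, if_neg (Ne.symm hu)]
      simp
    · simp
  simp only [h2]
  simp only [K0]
  rw [sum_push (fun w => f0 t z ug w) PW0 (fun z' => ∑ w : ∀ i, W i, (∏ i, PW i (w i)) *
        φ z' ug (fun i => f i t z (x i) ug (w i))), Fintype.sum_prod_type]
  refine Finset.sum_congr rfl fun w _ => ?_
  rw [Finset.mul_sum]
  exact Finset.sum_congr rfl fun v _ => by simp only [noiseLaw]; ring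

theorem sum_hist_succ (t : ℕ)
    (Φ : (Fin (t + 2) → Z) → (Fin (t + 1) → ∀ j, U j) → (∀ i, Fin (t + 2) → X i) → ℝ) :
    ∑ zh, ∑ uh, ∑ xh, Φ zh uh xh =
      ∑ zh : Fin (t + 1) → Z, ∑ uh : Fin t → ∀ j, U j, ∑ xh : ∀ i, Fin (t + 1) → X i,
        ∑ z' : Z, ∑ u : ∀ j, U j, ∑ x' : ∀ i, X i,
          Φ (Fin.snoc (α := fun _ => Z) zh z') (Fin.snoc (α := fun _ => ∀ j, U j) uh u)
            (fun i => Fin.snoc (α := fun _ => X i) (xh i) (x' i)) := by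
  rw [sum_snoc]
  refine Finset.sum_congr rfl fun zh _ => ?_
  simp only [sum_snoc t, sum_snoc_pi (t + 1)]
  rw [Finset.sum_comm]
  refine Finset.sum_congr rfl fun uh _ => ?_
  simp only [fun z' => Finset.sum_comm (s := (Finset.univ : Finset (∀ j, U j)))
    (t := (Finset.univ : Finset (∀ i, Fin (t + 1) → X i)))
    (f := fun u xh => ∑ x' : ∀ i, X i,
          Φ (Fin.snoc (α := fun _ => Z) zh z') (Fin.snoc (α := fun _ => ∀ j, U j) uh u)
            (fun i => Fin.snoc (α := fun _ => X i) (xh i) (x' i)))]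
  rw [Finset.sum_comm]

theorem sum_noise_paths (hPW0 : IsLaw PW0) (hPW : ∀ i, IsLaw (PW i)) :
    ∑ a : Fin T → W0, ∑ b : ∀ i, Fin T → W i, (∏ t, PW0 (a t)) * (∏ i, ∏ t, PW i (b i t)) = 1 := by
  simp only [← Finset.mul_sum, ← Finset.sum_mul]
  rw [← Fintype.prod_sum (fun (i : Fin n) (b : Fin T → W i) => ∏ t, PW i (b t)),
    ← Fintype.prod_sum (fun (_ : Fin T) (w : W0) => PW0 w)]
  have : ∀ i, ∑ b : Fin T → W i, ∏ t, PW i (b t) = 1 := by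
    intro i
    rw [← Fintype.prod_sum (fun (_ : Fin T) (w : W i) => PW i w)]
    simp [(hPW i).2]
  simp [this, hPW0.2]

/-- Expectations of functions of the histories: the joint law of
`(Z_{1:t}, U_{1:t-1}, X_{1:t})` is a common factor times a product over the subsystems, so the
local histories are conditionally independent given the common information. -/
theorem expect_hist (hPW0 : IsLaw PW0) (hPW : ∀ i, IsLaw (PW i)) (g : Strategy Z X U)
    (t : ℕ) (ht : t ≤ T)
    (ψ : (Fin (t + 1) → Z) → (Fin t → ∀ j, U j) → (∀ i, Fin (t + 1) → X i) → ℝ) :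
    ∑ ω : Omega T Z X W0 W, weight PZ PX PW0 PW ω *
        ψ (Zh f0 f g t ω) (Uh f0 f g t ω) (Xh f0 f g t ω) =
      ∑ zh, ∑ uh, ∑ xh, (A f0 PZ PW0 t zh uh * ∏ i, B f PX PW i (stn g i) t zh uh (xh i)) *
        ψ zh uh xh := by
  induction t with
  | zero =>
    have hL : ∑ ω : Omega T Z X W0 W, weight PZ PX PW0 PW ω *
        ψ (Zh f0 f g 0 ω) (Uh f0 f g 0 ω) (Xh f0 f g 0 ω) =
        ∑ z : Z, ∑ x : ∀ i, X i, (PZ z * ∏ i, PX i z (x i)) *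
          ψ (fun _ => z) (fun s => s.elim0) (fun i _ => x i) := by
      rw [Fintype.sum_prod_type]
      refine Finset.sum_congr rfl fun z _ => ?_
      rw [Fintype.sum_prod_type]
      refine Finset.sum_congr rfl fun x _ => ?_
      rw [Fintype.sum_prod_type, ← mul_one ((PZ z * ∏ i, PX i z (x i)) * _),
        ← sum_noise_paths (T := T) PW0 PW hPW0 hPW]
      simp only [Finset.mul_sum]
      refine Finset.sum_congr rfl fun a _ => Finset.sum_congr rfl fun b _ => ?_
      have hU : Uh f0 f g 0 ((z, x, a, b) : Omega T Z X W0 W) = fun s => s.elim0 := by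
        funext s; exact s.elim0
      rw [hU]
      simp only [weight, Zh, Xh, traj]
      ring
    rw [hL, ← Equiv.sum_comp (Equiv.funUnique (Fin 1) Z).symm]
    refine Finset.sum_congr rfl fun z _ => ?_
    rw [Fintype.sum_unique (ι := Fin 0 → ∀ j, U j),
      ← Equiv.sum_comp (Equiv.piCongrRight fun i => (Equiv.funUnique (Fin 1) (X i)).symm)]
    refine Finset.sum_congr rfl fun x _ => ?_
    have hU : (default : Fin 0 → ∀ j, U j) = fun s => s.elim0 := by
      funext s; exact s.elim0
    rw [hU]
    rfl
  | succ t ih =>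
    have htT : t < T := ht
    let up : (Fin (t + 1) → Z) → (Fin t → ∀ j, U j) → (∀ i, Fin (t + 1) → X i) → ∀ j, U j :=
      fun zh uh xh j => stn g j t zh (xh j) uh
    let nxt : (Fin (t + 1) → Z) → (Fin t → ∀ j, U j) → (∀ i, Fin (t + 1) → X i) →
        (W0 × ∀ i, W i) → ℝ := fun zh uh xh v =>
      ψ (Fin.snoc (α := fun _ => Z) zh (f0 t (zh (Fin.last t)) (up zh uh xh) v.1))
        (Fin.snoc (α := fun _ => ∀ j, U j) uh (up zh uh xh))
        (fun i => Fin.snoc (α := fun _ => X i) (xh i)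
          (f i t (zh (Fin.last t)) (xh i (Fin.last t)) (up zh uh xh) (v.2 i)))
    have hfresh := sum_fresh PZ PX PW0 PW hPW0 hPW (⟨t, htT⟩ : Fin T)
      (fun ω v => nxt (Zh f0 f g t ω) (Uh f0 f g t ω) (Xh f0 f g t ω) v)
      (fun ω v v' => by
        unfold Zh Uh Xh
        rw [traj_upd f0 f g (⟨t, htT⟩ : Fin T) ω v t le_rfl])
    have hL : ∀ ω : Omega T Z X W0 W,
        ψ (Zh f0 f g (t + 1) ω) (Uh f0 f g (t + 1) ω) (Xh f0 f g (t + 1) ω) =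
        nxt (Zh f0 f g t ω) (Uh f0 f g t ω) (Xh f0 f g t ω) (noiseAt ⟨t, htT⟩ ω) := by
      intro ω
      have hu : (fun j => Up f0 f g j t ω) =
          up (Zh f0 f g t ω) (Uh f0 f g t ω) (Xh f0 f g t ω) :=
        funext fun j => Up_eq f0 f g t ω j
      have hz := Zh_succ f0 f g ⟨t, htT⟩ ω
      have hx := funext (Xh_succ f0 f g ⟨t, htT⟩ ω)
      simp only [hu] at hz hx
      rw [hz, hx, Uh_succ, hu]
    simp only [hL]
    rw [hfresh, ih (by omega) (fun zh uh xh => ∑ v, noiseLaw PW0 PW v * nxt zh uh xh v),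
      sum_hist_succ]
    refine Finset.sum_congr rfl fun zh _ => Finset.sum_congr rfl fun uh _ =>
      Finset.sum_congr rfl fun xh _ => ?_
    have hs := step_sum f0 f PW0 PW t (zh (Fin.last t)) (fun i => xh i (Fin.last t))
      (up zh uh xh) (fun z' u x' => ψ (Fin.snoc (α := fun _ => Z) zh z')
        (Fin.snoc (α := fun _ => ∀ j, U j) uh u)
        (fun i => Fin.snoc (α := fun _ => X i) (xh i) (x' i)))
    rw [← hs]
    simp only [Finset.mul_sum, A, B, Fin.snoc_castSucc, Fin.snoc_last]
    refine Finset.sum_congr rfl fun z' _ => Finset.sum_congr rfl fun u _ =>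
      Finset.sum_congr rfl fun x' _ => ?_
    rw [Finset.prod_mul_distrib (f := fun i => B f PX PW i (stn g i) t zh uh (xh i))]
    ring

/-! ### Restriction to coordinator-form strategies -/

/-- The joint weight of `(Xⁱ_t, Uⁱ_t)` when the common information is prescribed: `B` summed
over the past local states. -/
noncomputable def Nf (i : Fin n)
    (gi : ∀ t : ℕ, (Fin (t + 1) → Z) → (Fin (t + 1) → X i) → (Fin t → ∀ j, U j) → U i)
    (t : ℕ) (zh : Fin (t + 1) → Z) (uh : Fin t → ∀ j, U j) (y : X i × U i) : ℝ :=
  ∑ xh, if (xh (Fin.last t), gi t zh xh uh) = y then B f PX PW i gi t zh uh xh else 0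

/-- The weight of `Xⁱ_t` when the common information is prescribed. -/
noncomputable def Mf (i : Fin n)
    (gi : ∀ t : ℕ, (Fin (t + 1) → Z) → (Fin (t + 1) → X i) → (Fin t → ∀ j, U j) → U i)
    (t : ℕ) (zh : Fin (t + 1) → Z) (uh : Fin t → ∀ j, U j) (a : X i) : ℝ :=
  ∑ xh, if xh (Fin.last t) = a then B f PX PW i gi t zh uh xh else 0

theorem expect_N (hPW0 : IsLaw PW0) (hPW : ∀ i, IsLaw (PW i)) (g : Strategy Z X U)
    (t : ℕ) (ht : t ≤ T)
    (ψ : (Fin (t + 1) → Z) → (Fin t → ∀ j, U j) → (∀ i, X i × U i) → ℝ) :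
    ∑ ω : Omega T Z X W0 W, weight PZ PX PW0 PW ω *
        ψ (Zh f0 f g t ω) (Uh f0 f g t ω) (fun i => (Xp f0 f g i t ω, Up f0 f g i t ω)) =
      ∑ zh, ∑ uh, ∑ y : ∀ i, X i × U i,
        (A f0 PZ PW0 t zh uh * ∏ i, Nf f PX PW i (stn g i) t zh uh (y i)) * ψ zh uh y := by
  have h1 := expect_hist f0 f PZ PX PW0 PW hPW0 hPW g t ht
    (fun zh uh xh => ψ zh uh (fun i => (xh i (Fin.last t), stn g i t zh (xh i) uh)))
  simp only [Up_eq]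
  refine h1.trans ?_
  refine Finset.sum_congr rfl fun zh _ => Finset.sum_congr rfl fun uh _ => ?_
  simp only [mul_assoc, ← Finset.mul_sum, Nf]
  congr 1
  convert (sum_push_pi (fun i (xh : Fin (t + 1) → X i) => (xh (Fin.last t), stn g i t zh xh uh))
    (fun i xh => B f PX PW i (stn g i) t zh uh xh) (ψ zh uh)).symm

theorem expect_M (hPW0 : IsLaw PW0) (hPW : ∀ i, IsLaw (PW i)) (g : Strategy Z X U)
    (t : ℕ) (ht : t ≤ T)
    (ψ : (Fin (t + 1) → Z) → (Fin t → ∀ j, U j) → (∀ i, X i) → ℝ) :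
    ∑ ω : Omega T Z X W0 W, weight PZ PX PW0 PW ω *
        ψ (Zh f0 f g t ω) (Uh f0 f g t ω) (fun i => Xp f0 f g i t ω) =
      ∑ zh, ∑ uh, ∑ x : ∀ i, X i,
        (A f0 PZ PW0 t zh uh * ∏ i, Mf f PX PW i (stn g i) t zh uh (x i)) * ψ zh uh x := by
  have h1 := expect_hist f0 f PZ PX PW0 PW hPW0 hPW g t ht
    (fun zh uh xh => ψ zh uh (fun i => xh i (Fin.last t)))
  refine h1.trans ?_
  refine Finset.sum_congr rfl fun zh _ => Finset.sum_congr rfl fun uh _ => ?_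
  simp only [mul_assoc, ← Finset.mul_sum, Mf]
  congr 1
  exact (sum_push_pi (fun i (xh : Fin (t + 1) → X i) => xh (Fin.last t))
    (fun i xh => B f PX PW i (stn g i) t zh uh xh) (ψ zh uh)).symm

section Station

variable (i : Fin n)
  (gi : ∀ t : ℕ, (Fin (t + 1) → Z) → (Fin (t + 1) → X i) → (Fin t → ∀ j, U j) → U i)

theorem B_nonneg (hPX : ∀ i z, IsLaw (PX i z)) (hPW : ∀ i, IsLaw (PW i)) (t : ℕ)
    (zh : Fin (t + 1) → Z) (uh : Fin t → ∀ j, U j) (xh : Fin (t + 1) → X i) :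
    0 ≤ B f PX PW i gi t zh uh xh := by
  induction t with
  | zero => exact (hPX i _).1 _
  | succ t ih =>
    refine mul_nonneg (ih _ _ _) (mul_nonneg (by split_ifs <;> norm_num) ?_)
    refine Finset.sum_nonneg fun w _ => ?_
    split_ifs
    · exact (hPW i).1 w
    · exact le_rfl

theorem Nf_nonneg (hPX : ∀ i z, IsLaw (PX i z)) (hPW : ∀ i, IsLaw (PW i)) (t : ℕ)
    (zh : Fin (t + 1) → Z) (uh : Fin t → ∀ j, U j) (y : X i × U i) :
    0 ≤ Nf f PX PW i gi t zh uh y := by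
  refine Finset.sum_nonneg fun xh _ => ?_
  split_ifs
  · exact B_nonneg f PX PW i gi hPX hPW t zh uh xh
  · exact le_rfl

theorem Mf_nonneg (hPX : ∀ i z, IsLaw (PX i z)) (hPW : ∀ i, IsLaw (PW i)) (t : ℕ)
    (zh : Fin (t + 1) → Z) (uh : Fin t → ∀ j, U j) (a : X i) :
    0 ≤ Mf f PX PW i gi t zh uh a := by
  refine Finset.sum_nonneg fun xh _ => ?_
  split_ifs
  · exact B_nonneg f PX PW i gi hPX hPW t zh uh xh
  · exact le_rfl

theorem sum_Nf (t : ℕ) (zh : Fin (t + 1) → Z) (uh : Fin t → ∀ j, U j) (a : X i) :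
    ∑ b, Nf f PX PW i gi t zh uh (a, b) = Mf f PX PW i gi t zh uh a := by
  simp only [Nf, Mf]
  rw [Finset.sum_comm]
  refine Finset.sum_congr rfl fun xh _ => ?_
  by_cases hx : xh (Fin.last t) = a <;> simp [hx]

theorem Nf_coord (d : ∀ t : ℕ, (Fin (t + 1) → Z) → (Fin t → ∀ j, U j) → X i → U i)
    (t : ℕ) (zh : Fin (t + 1) → Z) (uh : Fin t → ∀ j, U j) (a : X i) (b : U i) :
    Nf f PX PW i (fun t zh xh uh => d t zh uh (xh (Fin.last t))) t zh uh (a, b) =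
      if d t zh uh a = b then
        Mf f PX PW i (fun t zh xh uh => d t zh uh (xh (Fin.last t))) t zh uh a else 0 := by
  simp only [Nf, Mf, Prod.mk.injEq]
  split_ifs with hd
  · refine Finset.sum_congr rfl fun xh _ => ?_
    by_cases hx : xh (Fin.last t) = a <;> simp [hx, hd]
  · refine Finset.sum_eq_zero fun xh _ => ?_
    rw [if_neg]
    rintro ⟨rfl, h2⟩
    exact hd h2

theorem Mf_zero (zh : Fin 1 → Z) (uh : Fin 0 → ∀ j, U j) (a : X i) :
    Mf f PX PW i gi 0 zh uh a = PX i (zh 0) a := by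
  simp only [Mf, B]
  rw [← Equiv.sum_comp (Equiv.funUnique (Fin 1) (X i)).symm]
  simp

theorem Mf_succ (t : ℕ) (zh : Fin (t + 1) → Z) (uh : Fin t → ∀ j, U j) (z' : Z)
    (u : ∀ j, U j) (a' : X i) :
    Mf f PX PW i gi (t + 1) (Fin.snoc (α := fun _ => Z) zh z')
        (Fin.snoc (α := fun _ => ∀ j, U j) uh u) a' =
      ∑ a, Nf f PX PW i gi t zh uh (a, u i) * Ki f PW i t (zh (Fin.last t)) a u a' := by
  simp only [Mf, Nf, Finset.sum_mul]
  rw [sum_snoc, Finset.sum_comm (s := (Finset.univ : Finset (X i)))]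
  refine Finset.sum_congr rfl fun xh _ => ?_
  simp only [B, Fin.snoc_castSucc, Fin.snoc_last, Prod.mk.injEq]
  rw [Finset.sum_eq_single a' (fun b _ hb => if_neg hb) (by simp),
    Finset.sum_eq_single (xh (Fin.last t))
      (fun b _ hb => by rw [if_neg (fun e => hb e.1.symm), zero_mul]) (by simp)]
  simp

/-- State-action value in the single-station problem in which the histories of the common
information are exogenous and the running cost is `ℓ`. -/
noncomputable def stQ (ℓ : ∀ t : ℕ, (Fin (t + 1) → Z) → (Fin t → ∀ j, U j) → X i × U i → ℝ)
    (t : ℕ) (vn : (Fin (t + 2) → Z) → (Fin (t + 1) → ∀ j, U j) → X i → ℝ)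
    (zh : Fin (t + 1) → Z) (uh : Fin t → ∀ j, U j) (y : X i × U i) : ℝ :=
  ℓ t zh uh y + ∑ z', ∑ u : ∀ j, U j, if u i = y.2 then
    ∑ a', Ki f PW i t (zh (Fin.last t)) y.1 u a' *
      vn (Fin.snoc (α := fun _ => Z) zh z') (Fin.snoc (α := fun _ => ∀ j, U j) uh u) a' else 0

/-- Value function of the single-station problem. -/
noncomputable def stV (T : ℕ)
    (ℓ : ∀ t : ℕ, (Fin (t + 1) → Z) → (Fin t → ∀ j, U j) → X i × U i → ℝ)
    (t : ℕ) (zh : Fin (t + 1) → Z) (uh : Fin t → ∀ j, U j) (a : X i) : ℝ :=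
  if _h : t < T then
    ⨅ b : U i, stQ f PW i ℓ t (fun zh' uh' a' => stV T ℓ (t + 1) zh' uh' a') zh uh (a, b)
  else 0
termination_by T - t
decreasing_by omega

theorem sum_common_succ (t : ℕ)
    (Φ : (Fin (t + 2) → Z) → (Fin (t + 1) → ∀ j, U j) → ℝ) :
    ∑ zh, ∑ uh, Φ zh uh =
      ∑ zh : Fin (t + 1) → Z, ∑ uh : Fin t → ∀ j, U j, ∑ z' : Z, ∑ u : ∀ j, U j,
          Φ (Fin.snoc (α := fun _ => Z) zh z') (Fin.snoc (α := fun _ => ∀ j, U j) uh u) := by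
  rw [sum_snoc]
  refine Finset.sum_congr rfl fun zh _ => ?_
  simp only [sum_snoc t]
  rw [Finset.sum_comm]

/-- One step of the forward recursion of the single-station problem. -/
theorem sum_stQ (ℓ : ∀ t : ℕ, (Fin (t + 1) → Z) → (Fin t → ∀ j, U j) → X i × U i → ℝ)
    (t : ℕ) (vn : (Fin (t + 2) → Z) → (Fin (t + 1) → ∀ j, U j) → X i → ℝ) :
    ∑ zh, ∑ uh, ∑ y, Nf f PX PW i gi t zh uh y * stQ f PW i ℓ t vn zh uh y =
      ∑ zh, ∑ uh, ∑ y, Nf f PX PW i gi t zh uh y * ℓ t zh uh y +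
      ∑ zh, ∑ uh, ∑ a, Mf f PX PW i gi (t + 1) zh uh a * vn zh uh a := by
  rw [sum_common_succ]
  simp only [← Finset.sum_add_distrib]
  refine Finset.sum_congr rfl fun zh _ => Finset.sum_congr rfl fun uh _ => ?_
  simp only [stQ, mul_add, Finset.sum_add_distrib, Mf_succ]
  congr 1
  simp only [Finset.mul_sum, mul_ite, mul_zero]
  rw [Finset.sum_comm]
  refine Finset.sum_congr rfl fun z' _ => ?_
  rw [Finset.sum_comm]
  refine Finset.sum_congr rfl fun u _ => ?_
  rw [Fintype.sum_prod_type]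
  simp only [Finset.sum_ite_eq, Finset.mem_univ, if_true]
  rw [Finset.sum_comm]
  refine Finset.sum_congr rfl fun a' _ => ?_
  rw [Finset.sum_mul]
  exact Finset.sum_congr rfl fun a _ => by ring

/-- In the single-station problem, some law depending only on the current local state and the
common information is at least as good as every law using the whole local history. -/
theorem station_improve (T : ℕ) (hPX : ∀ i z, IsLaw (PX i z)) (hPW : ∀ i, IsLaw (PW i))
    (ℓ : ∀ t : ℕ, (Fin (t + 1) → Z) → (Fin t → ∀ j, U j) → X i × U i → ℝ) :
    ∃ d : ∀ t : ℕ, (Fin (t + 1) → Z) → (Fin t → ∀ j, U j) → X i → U i,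
      ∑ t ∈ Finset.range T, ∑ zh, ∑ uh, ∑ y,
        Nf f PX PW i (fun t zh xh uh => d t zh uh (xh (Fin.last t))) t zh uh y * ℓ t zh uh y ≤
      ∑ t ∈ Finset.range T, ∑ zh, ∑ uh, ∑ y, Nf f PX PW i gi t zh uh y * ℓ t zh uh y := by
  let v := fun t zh uh a => stV f PW i T ℓ t zh uh a
  have hex : ∀ t zh uh a, ∃ b : U i, ∀ b',
      stQ f PW i ℓ t (v (t + 1)) zh uh (a, b) ≤ stQ f PW i ℓ t (v (t + 1)) zh uh (a, b') :=
    fun t zh uh a => Finite.exists_min fun b => stQ f PW i ℓ t (v (t + 1)) zh uh (a, b)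
  choose d hd using hex
  have hv : ∀ t, t < T → ∀ zh uh a, v t zh uh a =
      stQ f PW i ℓ t (v (t + 1)) zh uh (a, d t zh uh a) := by
    intro t ht zh uh a
    simp only [v]
    rw [stV, dif_pos ht]
    exact le_antisymm (ciInf_le (Set.finite_range _).bddBelow _) (le_ciInf fun b => hd t zh uh a b)
  let S := fun (gi : ∀ t : ℕ, (Fin (t + 1) → Z) → (Fin (t + 1) → X i) →
      (Fin t → ∀ j, U j) → U i) (t : ℕ) =>
    ∑ zh, ∑ uh, ∑ a, Mf f PX PW i gi t zh uh a * v t zh uh a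
  let C := fun (gi : ∀ t : ℕ, (Fin (t + 1) → Z) → (Fin (t + 1) → X i) →
      (Fin t → ∀ j, U j) → U i) (t : ℕ) =>
    ∑ zh, ∑ uh, ∑ y, Nf f PX PW i gi t zh uh y * ℓ t zh uh y
  let gd := fun (t : ℕ) (zh : Fin (t + 1) → Z) (xh : Fin (t + 1) → X i)
    (uh : Fin t → ∀ j, U j) => d t zh uh (xh (Fin.last t))
  have hge : ∀ t, t < T → S gi t - S gi (t + 1) ≤ C gi t := by
    intro t ht
    have h1 := sum_stQ f PX PW i gi ℓ t (v (t + 1))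
    have h2 : S gi t ≤
        ∑ zh, ∑ uh, ∑ y, Nf f PX PW i gi t zh uh y * stQ f PW i ℓ t (v (t + 1)) zh uh y := by
      refine Finset.sum_le_sum fun zh _ => Finset.sum_le_sum fun uh _ => ?_
      rw [Fintype.sum_prod_type]
      refine Finset.sum_le_sum fun a _ => ?_
      rw [← sum_Nf, Finset.sum_mul]
      refine Finset.sum_le_sum fun b _ => ?_
      rw [hv t ht]
      exact mul_le_mul_of_nonneg_left (hd t zh uh a b)
        (Nf_nonneg f PX PW i gi hPX hPW t zh uh _)
    simp only [S, C] at *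
    linarith
  have heq : ∀ t, t < T → C gd t = S gd t - S gd (t + 1) := by
    intro t ht
    have h1 := sum_stQ f PX PW i gd ℓ t (v (t + 1))
    have h2 : S gd t =
        ∑ zh, ∑ uh, ∑ y, Nf f PX PW i gd t zh uh y * stQ f PW i ℓ t (v (t + 1)) zh uh y := by
      refine Finset.sum_congr rfl fun zh _ => Finset.sum_congr rfl fun uh _ => ?_
      rw [Fintype.sum_prod_type]
      refine Finset.sum_congr rfl fun a _ => ?_
      simp only [gd, Nf_coord, ite_mul, zero_mul, Finset.sum_ite_eq, Finset.mem_univ, if_true]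
      rw [hv t ht]
    simp only [S, C] at *
    linarith
  have hS0 : S gd 0 = S gi 0 := by simp only [S, Mf_zero]
  have hST : ∀ gi, S gi T = 0 := by
    intro gi
    have : ∀ zh uh a, v T zh uh a = 0 := by
      intro zh uh a
      simp only [v]
      rw [stV, dif_neg (lt_irrefl _)]
    simp [S, this]
  refine ⟨d, ?_⟩
  calc ∑ t ∈ Finset.range T, C gd t = ∑ t ∈ Finset.range T, (S gd t - S gd (t + 1)) :=
        Finset.sum_congr rfl fun t ht => heq t (Finset.mem_range.1 ht)
    _ = ∑ t ∈ Finset.range T, (S gi t - S gi (t + 1)) := by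
        rw [Finset.sum_range_sub', Finset.sum_range_sub', hS0, hST, hST]
    _ ≤ ∑ t ∈ Finset.range T, C gi t :=
        Finset.sum_le_sum fun t ht => hge t (Finset.mem_range.1 ht)

end Station

variable (c : ℕ → Z → (∀ i, X i) → (∀ i, U i) → ℝ)

/-- The total cost is multilinear in the station weights `Nf`. -/
theorem J_eq (hPW0 : IsLaw PW0) (hPW : ∀ i, IsLaw (PW i)) (g : Strategy Z X U) :
    J f0 f c (weight (T := T) PZ PX PW0 PW) g =
      ∑ t ∈ Finset.range T, ∑ zh, ∑ uh, ∑ y : ∀ i, X i × U i,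
        (A f0 PZ PW0 t zh uh * ∏ i, Nf f PX PW i (stn g i) t zh uh (y i)) *
          c t (zh (Fin.last t)) (fun i => (y i).1) (fun i => (y i).2) := by
  simp only [J, Finset.mul_sum]
  rw [Finset.sum_comm]
  refine Finset.sum_congr rfl fun t ht => ?_
  exact expect_N f0 f PZ PX PW0 PW hPW0 hPW g t (Finset.mem_range.1 ht).le
    (fun zh _ y => c t (zh (Fin.last t)) (fun i => (y i).1) (fun i => (y i).2))

/-- Replacing the law of one station by a suitable coordinator-form law does not increase the
cost. -/
theorem improve_one (hPX : ∀ i z, IsLaw (PX i z)) (hPW0 : IsLaw PW0)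
    (hPW : ∀ i, IsLaw (PW i)) (g : Strategy Z X U) (i : Fin n) :
    ∃ g' : Strategy Z X U, (∀ j, j ≠ i → stn g' j = stn g j) ∧
      (∃ d : ∀ t : ℕ, (Fin (t + 1) → Z) → (Fin t → ∀ j, U j) → X i → U i,
        stn g' i = fun t zh xh uh => d t zh uh (xh (Fin.last t))) ∧
      J f0 f c (weight (T := T) PZ PX PW0 PW) g' ≤
        J f0 f c (weight (T := T) PZ PX PW0 PW) g := by
  let ℓ : ∀ t : ℕ, (Fin (t + 1) → Z) → (Fin t → ∀ j, U j) → X i × U i → ℝ :=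
    fun t zh uh p => ∑ y : ∀ i, X i × U i, if y i = p then
      A f0 PZ PW0 t zh uh * (∏ j ∈ Finset.univ.erase i, Nf f PX PW j (stn g j) t zh uh (y j)) *
        c t (zh (Fin.last t)) (fun i => (y i).1) (fun i => (y i).2) else 0
  have hlin : ∀ g' : Strategy Z X U, (∀ j, j ≠ i → stn g' j = stn g j) →
      J f0 f c (weight (T := T) PZ PX PW0 PW) g' =
      ∑ t ∈ Finset.range T, ∑ zh, ∑ uh, ∑ p,
        Nf f PX PW i (stn g' i) t zh uh p * ℓ t zh uh p := by
    intro g' hg'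
    rw [J_eq f0 f PZ PX PW0 PW c hPW0 hPW]
    refine Finset.sum_congr rfl fun t _ => Finset.sum_congr rfl fun zh _ =>
      Finset.sum_congr rfl fun uh _ => ?_
    simp only [ℓ, Finset.mul_sum, mul_ite, mul_zero]
    rw [Finset.sum_comm]
    refine Finset.sum_congr rfl fun y _ => ?_
    rw [Finset.sum_ite_eq, if_pos (Finset.mem_univ _),
      ← Finset.mul_prod_erase Finset.univ _ (Finset.mem_univ i)]
    have : ∏ j ∈ Finset.univ.erase i, Nf f PX PW j (stn g' j) t zh uh (y j) =
        ∏ j ∈ Finset.univ.erase i, Nf f PX PW j (stn g j) t zh uh (y j) :=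
      Finset.prod_congr rfl fun j hj => by rw [hg' j (Finset.ne_of_mem_erase hj)]
    rw [this]
    ring
  obtain ⟨d, hd⟩ := station_improve f PX PW i (stn g i) T hPX hPW ℓ
  let g' : Strategy Z X U := Function.update (β := fun i => ∀ t : ℕ, (Fin (t + 1) → Z) →
    (Fin (t + 1) → X i) → (Fin t → ∀ j, U j) → U i) (stn g) i
    (fun t zh xh uh => d t zh uh (xh (Fin.last t)))
  have h1 : ∀ j, j ≠ i → stn g' j = stn g j := fun j hj => Function.update_of_ne hj _ _
  have h2 : stn g' i = fun t zh xh uh => d t zh uh (xh (Fin.last t)) :=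
    Function.update_self i _ _
  refine ⟨g', h1, ⟨d, h2⟩, ?_⟩
  rw [hlin g' h1, hlin g (fun _ _ => rfl), h2]
  exact hd

/-- Coordinator-form strategies are a complete class. -/
theorem exists_coord (hPX : ∀ i z, IsLaw (PX i z)) (hPW0 : IsLaw PW0)
    (hPW : ∀ i, IsLaw (PW i)) (g : Strategy Z X U) :
    ∃ d : CoordStrategy Z X U, J f0 f c (weight (T := T) PZ PX PW0 PW) (ofCoord d) ≤
        J f0 f c (weight (T := T) PZ PX PW0 PW) g := by
  have key : ∀ S : Finset (Fin n), ∃ g' : Strategy Z X U, (∀ i ∈ S,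
      ∃ d : ∀ t : ℕ, (Fin (t + 1) → Z) → (Fin t → ∀ j, U j) → X i → U i,
        stn g' i = fun t zh xh uh => d t zh uh (xh (Fin.last t))) ∧
      J f0 f c (weight (T := T) PZ PX PW0 PW) g' ≤
        J f0 f c (weight (T := T) PZ PX PW0 PW) g := by
    intro S
    induction S using Finset.induction_on with
    | empty => exact ⟨g, by simp, le_rfl⟩
    | insert i S _ ih =>
      obtain ⟨g1, h1, h1'⟩ := ih
      obtain ⟨g2, h2, h2', h2''⟩ := improve_one (T := T) f0 f PZ PX PW0 PW c hPX hPW0 hPW g1 i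
      refine ⟨g2, fun j hj => ?_, h2''.trans h1'⟩
      by_cases hji : j = i
      · subst hji; exact h2'
      · rw [h2 j hji]
        exact h1 j ((Finset.mem_insert.1 hj).resolve_left hji)
  obtain ⟨g', h1, h2⟩ := key Finset.univ
  choose d hd using fun i => h1 i (Finset.mem_univ i)
  refine ⟨fun i t zh uh => d i t zh uh, ?_⟩
  have : g' = ofCoord (fun i t zh uh => d i t zh uh) := funext fun i => hd i
  rw [← this]
  exact h2

/-! ### The belief process -/

/-- The belief on the local states as a function of the common information, obtained by
normalizing the weights `Mf`. -/
noncomputable def thetaC (g : Strategy Z X U) (t : ℕ) (zh : Fin (t + 1) → Z)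
    (uh : Fin t → ∀ j, U j) : ∀ i, X i → ℝ :=
  fun i x => Mf f PX PW i (stn g i) t zh uh x / ∑ a, Mf f PX PW i (stn g i) t zh uh a

theorem weight_nonneg (hPZ : IsLaw PZ) (hPX : ∀ i z, IsLaw (PX i z)) (hPW0 : IsLaw PW0)
    (hPW : ∀ i, IsLaw (PW i)) (ω : Omega T Z X W0 W) : 0 ≤ weight PZ PX PW0 PW ω :=
  mul_nonneg (mul_nonneg (mul_nonneg (hPZ.1 _) (Finset.prod_nonneg fun i _ => (hPX i _).1 _))
    (Finset.prod_nonneg fun _ _ => hPW0.1 _))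
    (Finset.prod_nonneg fun i _ => Finset.prod_nonneg fun _ _ => (hPW i).1 _)

theorem sum_common (hPW0 : IsLaw PW0) (hPW : ∀ i, IsLaw (PW i)) (g : Strategy Z X U)
    (t : ℕ) (ht : t ≤ T) (zh : Fin (t + 1) → Z) (uh : Fin t → ∀ j, U j)
    (χ : (∀ i, X i) → ℝ) :
    ∑ ω : Omega T Z X W0 W, weight PZ PX PW0 PW ω *
        (if Zh f0 f g t ω = zh ∧ Uh f0 f g t ω = uh then χ (fun i => Xp f0 f g i t ω) else 0) =
      A f0 PZ PW0 t zh uh *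
        ∑ x : ∀ i, X i, (∏ i, Mf f PX PW i (stn g i) t zh uh (x i)) * χ x := by
  rw [expect_M f0 f PZ PX PW0 PW hPW0 hPW g t ht
    (fun zh' uh' x => if zh' = zh ∧ uh' = uh then χ x else 0)]
  rw [Finset.sum_eq_single zh, Finset.sum_eq_single uh]
  · simp [Finset.mul_sum, mul_assoc]
  · intro uh' _ h'; simp [h']
  · simp
  · intro zh' _ h'; simp [h']
  · simp

theorem common_ne_zero (hPZ : IsLaw PZ) (hPX : ∀ i z, IsLaw (PX i z)) (hPW0 : IsLaw PW0)
    (hPW : ∀ i, IsLaw (PW i)) (g : Strategy Z X U) (t : ℕ) (ht : t ≤ T)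
    (ω : Omega T Z X W0 W) (hω : weight PZ PX PW0 PW ω ≠ 0) :
    A f0 PZ PW0 t (Zh f0 f g t ω) (Uh f0 f g t ω) *
      ∏ i, ∑ a, Mf f PX PW i (stn g i) t (Zh f0 f g t ω) (Uh f0 f g t ω) a ≠ 0 := by
  have h1 := sum_common f0 f PZ PX PW0 PW hPW0 hPW g t ht (Zh f0 f g t ω) (Uh f0 f g t ω)
    (fun _ => 1)
  simp only [mul_one] at h1
  rw [Fintype.prod_sum, ← h1]
  have hnn := weight_nonneg (T := T) PZ PX PW0 PW hPZ hPX hPW0 hPW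
  refine ne_of_gt (lt_of_lt_of_le (lt_of_le_of_ne (hnn ω) (Ne.symm hω)) ?_)
  refine le_trans ?_ (Finset.single_le_sum (f := fun ω' : Omega T Z X W0 W =>
    weight PZ PX PW0 PW ω' * (if Zh f0 f g t ω' = Zh f0 f g t ω ∧
      Uh f0 f g t ω' = Uh f0 f g t ω then 1 else 0)) (fun ω' _ => ?_) (Finset.mem_univ ω))
  · simp
  · exact mul_nonneg (hnn ω') (by split_ifs <;> norm_num)

theorem sum_prod_marginal (M : ∀ i, X i → ℝ) (i : Fin n) (x : X i) :
    ∑ x' : ∀ j, X j, (∏ j, M j (x' j)) * (if x' i = x then 1 else 0) =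
      M i x * ∏ j ∈ Finset.univ.erase i, ∑ a, M j a := by
  let M' : ∀ j, X j → ℝ := Function.update M i (fun a => if a = x then M i a else 0)
  have hi : M' i = fun a => if a = x then M i a else 0 := Function.update_self _ _ _
  have hj : ∀ j, j ≠ i → M' j = M j := fun j hj => Function.update_of_ne hj _ _
  have h1 : ∀ x' : ∀ j, X j, (∏ j, M j (x' j)) * (if x' i = x then 1 else 0) =
      ∏ j, M' j (x' j) := by
    intro x'
    rw [← Finset.mul_prod_erase Finset.univ (fun j => M' j (x' j)) (Finset.mem_univ i),
      ← Finset.mul_prod_erase Finset.univ (fun j => M j (x' j)) (Finset.mem_univ i), hi,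
      Finset.prod_congr rfl fun j (h : j ∈ Finset.univ.erase i) =>
        congrFun (hj j (Finset.ne_of_mem_erase h)) (x' j)]
    by_cases hx : x' i = x <;> simp [hx]
  simp only [h1]
  rw [← Fintype.prod_sum,
    ← Finset.mul_prod_erase Finset.univ (fun j => ∑ a, M' j a) (Finset.mem_univ i), hi,
    Finset.prod_congr rfl fun j (h : j ∈ Finset.univ.erase i) =>
        congrArg (fun m : X j → ℝ => ∑ a, m a) (hj j (Finset.ne_of_mem_erase h))]
  simp

/-- By conditional independence of the local states, the conditional law of `Xⁱ_t` is the
normalization of the weight `Mf` of subsystem `i` alone. -/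
theorem Theta_eq (hPZ : IsLaw PZ) (hPX : ∀ i z, IsLaw (PX i z)) (hPW0 : IsLaw PW0)
    (hPW : ∀ i, IsLaw (PW i)) (g : Strategy Z X U) (t : ℕ) (ht : t ≤ T)
    (ω : Omega T Z X W0 W) (hω : weight PZ PX PW0 PW ω ≠ 0) :
    (fun i => Theta f0 f (weight (T := T) PZ PX PW0 PW) g i t ω) =
      thetaC f PX PW g t (Zh f0 f g t ω) (Uh f0 f g t ω) := by
  funext i x
  have hne := common_ne_zero f0 f PZ PX PW0 PW hPZ hPX hPW0 hPW g t ht ω hω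
  have h1 := sum_common f0 f PZ PX PW0 PW hPW0 hPW g t ht (Zh f0 f g t ω) (Uh f0 f g t ω)
    (fun _ => 1)
  have h2 := sum_common f0 f PZ PX PW0 PW hPW0 hPW g t ht (Zh f0 f g t ω) (Uh f0 f g t ω)
    (fun x' => if x' i = x then 1 else 0)
  rw [sum_prod_marginal] at h2
  simp only [mul_one, mul_ite, mul_zero, ← Fintype.prod_sum] at h1 h2
  rw [← Finset.mul_prod_erase Finset.univ _ (Finset.mem_univ i)] at h1 hne
  simp only [Theta, CondPr, Pr, common_iff, thetaC]
  rw [h1]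
  have h3 : ∀ ω' : Omega T Z X W0 W, (if Xp f0 f g i t ω' = x ∧ Zh f0 f g t ω' = Zh f0 f g t ω ∧
      Uh f0 f g t ω' = Uh f0 f g t ω then weight PZ PX PW0 PW ω' else 0) =
      if Zh f0 f g t ω' = Zh f0 f g t ω ∧ Uh f0 f g t ω' = Uh f0 f g t ω then
        (if Xp f0 f g i t ω' = x then weight PZ PX PW0 PW ω' else 0) else 0 := by
    intro ω'
    by_cases ha : Xp f0 f g i t ω' = x <;> simp [ha]
  rw [Finset.sum_congr rfl fun ω' _ => h3 ω', h2]
  have ha := left_ne_zero_of_mul hne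
  have hb := left_ne_zero_of_mul (right_ne_zero_of_mul hne)
  have hc := right_ne_zero_of_mul (right_ne_zero_of_mul hne)
  rw [mul_div_mul_left _ _ ha, mul_div_mul_right _ _ hc]

theorem thetaC_isLaw (hPZ : IsLaw PZ) (hPX : ∀ i z, IsLaw (PX i z)) (hPW0 : IsLaw PW0)
    (hPW : ∀ i, IsLaw (PW i)) (g : Strategy Z X U) (t : ℕ) (ht : t ≤ T)
    (ω : Omega T Z X W0 W) (hω : weight PZ PX PW0 PW ω ≠ 0) (i : Fin n) :
    IsLaw (thetaC f PX PW g t (Zh f0 f g t ω) (Uh f0 f g t ω) i) := by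
  have hne := common_ne_zero f0 f PZ PX PW0 PW hPZ hPX hPW0 hPW g t ht ω hω
  have hi := Finset.prod_ne_zero_iff.1 (right_ne_zero_of_mul hne) i (Finset.mem_univ i)
  have hM := Mf_nonneg f PX PW i (stn g i) hPX hPW t (Zh f0 f g t ω) (Uh f0 f g t ω)
  refine ⟨fun a => div_nonneg (hM a) (Finset.sum_nonneg fun b _ => hM b), ?_⟩
  simp only [thetaC]
  rw [← Finset.sum_div, div_self hi]

theorem thetaC_zero (hPX : ∀ i z, IsLaw (PX i z)) (g : Strategy Z X U) (zh : Fin 1 → Z)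
    (uh : Fin 0 → ∀ j, U j) :
    thetaC f PX PW g 0 zh uh = fun i x => PX i (zh 0) x := by
  funext i x
  simp only [thetaC, Mf_zero, (hPX i (zh 0)).2, div_one]

/-! ### The dynamic program over coordinator-form strategies -/

variable (F : ℕ → (∀ i, X i → ℝ) → Z → (∀ j, U j) → (∀ i, X i → U i) → (∀ i, X i → ℝ))

/-- The belief update along the trajectory, with the belief written as a function of the common
information. -/
theorem thetaC_succ (hPZ : IsLaw PZ) (hPX : ∀ i z, IsLaw (PX i z)) (hPW0 : IsLaw PW0)
    (hPW : ∀ i, IsLaw (PW i))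
    (hF : ∀ d : CoordStrategy Z X U, ∀ t : ℕ, t + 1 < T →
      ∀ ω : Omega T Z X W0 W, weight PZ PX PW0 PW ω ≠ 0 →
        (fun i => Theta f0 f (weight PZ PX PW0 PW) (ofCoord d) i (t + 1) ω) =
          F t (fun i => Theta f0 f (weight PZ PX PW0 PW) (ofCoord d) i t ω)
            (Zp f0 f (ofCoord d) (t + 1) ω)
            (fun j => Up f0 f (ofCoord d) j t ω)
            (fun i => Dp f0 f d i t ω))
    (d : CoordStrategy Z X U) (t : ℕ) (ht : t + 1 < T)
    (ω : Omega T Z X W0 W) (hω : weight PZ PX PW0 PW ω ≠ 0) :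
    thetaC f PX PW (ofCoord d) (t + 1) (Zh f0 f (ofCoord d) (t + 1) ω)
        (Uh f0 f (ofCoord d) (t + 1) ω) =
      F t (thetaC f PX PW (ofCoord d) t (Zh f0 f (ofCoord d) t ω) (Uh f0 f (ofCoord d) t ω))
        (Zp f0 f (ofCoord d) (t + 1) ω) (fun j => Up f0 f (ofCoord d) j t ω)
        (fun i => d i t (Zh f0 f (ofCoord d) t ω) (Uh f0 f (ofCoord d) t ω)) := by
  have h1 := hF d t ht ω hω
  rw [Theta_eq f0 f PZ PX PW0 PW hPZ hPX hPW0 hPW _ _ ht.le ω hω,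
    Theta_eq f0 f PZ PX PW0 PW hPZ hPX hPW0 hPW _ _ (by omega) ω hω] at h1
  rw [h1]
  congr 1
  funext i
  have hz : (fun s : Fin (t + 1) => Zp f0 f (ofCoord d) s ω) = Zh f0 f (ofCoord d) t ω :=
    funext fun s => (Zh_apply f0 f _ t ω s).symm
  have hu : (fun (s : Fin t) (j : Fin n) => Up f0 f (ofCoord d) j s ω) =
      Uh f0 f (ofCoord d) t ω :=
    funext fun s => funext fun j => (Uh_apply f0 f _ t ω s j).symm
  simp only [Dp]
  rw [hz, hu]

/-- Expected value-to-go `E[V_t(Z_t, Θ_t)]` under the strategy `g`. -/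
noncomputable def val (g : Strategy Z X U) (T t : ℕ) : ℝ :=
  ∑ ω : Omega T Z X W0 W, weight PZ PX PW0 PW ω *
    V f0 T PW0 c F t (Zp f0 f g t ω) (thetaC f PX PW g t (Zh f0 f g t ω) (Uh f0 f g t ω))

/-- The sum over local states weighted by `Mf` is the total mass times the expectation under
the normalized beliefs; this also holds when some mass vanishes. -/
theorem normalize (hPX : ∀ i z, IsLaw (PX i z)) (hPW : ∀ i, IsLaw (PW i))
    (g : Strategy Z X U) (t : ℕ) (zh : Fin (t + 1) → Z) (uh : Fin t → ∀ j, U j)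
    (G : (∀ i, X i) → ℝ) :
    ∑ x : ∀ i, X i, (∏ i, Mf f PX PW i (stn g i) t zh uh (x i)) * G x =
      (∑ x : ∀ i, X i, ∏ i, Mf f PX PW i (stn g i) t zh uh (x i)) *
        ∑ x : ∀ i, X i, (∏ i, thetaC f PX PW g t zh uh i (x i)) * G x := by
  rw [← Fintype.prod_sum, Finset.mul_sum]
  refine Finset.sum_congr rfl fun x _ => ?_
  rw [← mul_assoc, ← Finset.prod_mul_distrib]
  congr 1
  refine Finset.prod_congr rfl fun i _ => ?_
  by_cases h0 : ∑ a, Mf f PX PW i (stn g i) t zh uh a = 0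
  · have := (Finset.sum_eq_zero_iff_of_nonneg (fun a _ =>
      Mf_nonneg f PX PW i (stn g i) hPX hPW t zh uh a)).1 h0 (x i) (Finset.mem_univ _)
    rw [h0, this, zero_mul]
  · simp only [thetaC]
    rw [mul_div_cancel₀ _ h0]

theorem sum_noise_fst (hPW : ∀ i, IsLaw (PW i)) (φ : W0 → ℝ) :
    ∑ v : W0 × ∀ i, W i, noiseLaw PW0 PW v * φ v.1 = ∑ w, PW0 w * φ w := by
  rw [Fintype.sum_prod_type]
  refine Finset.sum_congr rfl fun w _ => ?_
  simp only [noiseLaw, ← Finset.sum_mul, ← Finset.mul_sum]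
  rw [← Fintype.prod_sum, Finset.prod_eq_one fun i _ => (hPW i).2, mul_one]

/-- One-step identity: under a coordinator-form strategy, the expected stage cost plus the
expected value-to-go at the next time is the expected state-action value. -/
theorem cost_add_val (hPZ : IsLaw PZ) (hPX : ∀ i z, IsLaw (PX i z)) (hPW0 : IsLaw PW0)
    (hPW : ∀ i, IsLaw (PW i))
    (hF : ∀ d : CoordStrategy Z X U, ∀ t : ℕ, t + 1 < T →
      ∀ ω : Omega T Z X W0 W, weight PZ PX PW0 PW ω ≠ 0 →
        (fun i => Theta f0 f (weight PZ PX PW0 PW) (ofCoord d) i (t + 1) ω) =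
          F t (fun i => Theta f0 f (weight PZ PX PW0 PW) (ofCoord d) i t ω)
            (Zp f0 f (ofCoord d) (t + 1) ω)
            (fun j => Up f0 f (ofCoord d) j t ω)
            (fun i => Dp f0 f d i t ω))
    (d : CoordStrategy Z X U) (t : ℕ) (ht : t < T) :
    ∑ ω : Omega T Z X W0 W, weight PZ PX PW0 PW ω *
        c t (Zp f0 f (ofCoord d) t ω) (fun i => Xp f0 f (ofCoord d) i t ω)
          (fun i => Up f0 f (ofCoord d) i t ω) +
      val f0 f PZ PX PW0 PW c F (ofCoord d) T (t + 1) =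
    ∑ ω : Omega T Z X W0 W, weight PZ PX PW0 PW ω *
      Qval f0 PW0 c F (fun z' θ' => V f0 T PW0 c F (t + 1) z' θ') t (Zp f0 f (ofCoord d) t ω)
        (thetaC f PX PW (ofCoord d) t (Zh f0 f (ofCoord d) t ω) (Uh f0 f (ofCoord d) t ω))
        (fun i => d i t (Zh f0 f (ofCoord d) t ω) (Uh f0 f (ofCoord d) t ω)) := by
  let g := ofCoord d
  let Ξ : (Fin (t + 1) → Z) → (Fin t → ∀ j, U j) → (∀ i, X i) → W0 → ℝ := fun zh uh x w =>
    c t (zh (Fin.last t)) x (fun j => d j t zh uh (x j)) +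
      V f0 T PW0 c F (t + 1) (f0 t (zh (Fin.last t)) (fun j => d j t zh uh (x j)) w)
        (F t (thetaC f PX PW g t zh uh)
          (f0 t (zh (Fin.last t)) (fun j => d j t zh uh (x j)) w)
          (fun j => d j t zh uh (x j)) (fun i => d i t zh uh))
  have hL : ∀ ω : Omega T Z X W0 W, weight PZ PX PW0 PW ω *
        c t (Zp f0 f g t ω) (fun i => Xp f0 f g i t ω) (fun i => Up f0 f g i t ω) +
      weight PZ PX PW0 PW ω * V f0 T PW0 c F (t + 1) (Zp f0 f g (t + 1) ω)
        (thetaC f PX PW g (t + 1) (Zh f0 f g (t + 1) ω) (Uh f0 f g (t + 1) ω)) =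
      weight PZ PX PW0 PW ω * Ξ (Zh f0 f g t ω) (Uh f0 f g t ω) (fun i => Xp f0 f g i t ω)
        (noiseAt ⟨t, ht⟩ ω).1 := by
    intro ω
    by_cases hω : weight PZ PX PW0 PW ω = 0
    · simp [hω]
    rw [← mul_add]
    congr 1
    have hu : (fun j => Up f0 f g j t ω) =
        fun j => d j t (Zh f0 f g t ω) (Uh f0 f g t ω) (Xp f0 f g j t ω) :=
      funext fun j => Up_eq f0 f g t ω j
    have hz : Zp f0 f g (t + 1) ω = f0 t (Zh f0 f g t ω (Fin.last t))
        (fun j => Up f0 f g j t ω) (noiseAt ⟨t, ht⟩ ω).1 := by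
      have := congrFun (Zh_succ f0 f g ⟨t, ht⟩ ω) (Fin.last (t + 1))
      rw [Fin.snoc_last] at this
      exact this
    simp only [Ξ]
    by_cases hT : t + 1 < T
    · rw [thetaC_succ f0 f PZ PX PW0 PW F hPZ hPX hPW0 hPW hF d t hT ω hω]
      change _ + V f0 T PW0 c F (t + 1) (Zp f0 f g (t + 1) ω) (F t _ (Zp f0 f g (t + 1) ω)
        (fun j => Up f0 f g j t ω) _) = _
      rw [hz, hu]
      rfl
    · have hV : ∀ z θ, V f0 T PW0 c F (t + 1) z θ = 0 := by
        intro z θ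
        rw [V, dif_neg hT]
      rw [hV, hV, hu]
      rfl
  have hfresh := sum_fresh PZ PX PW0 PW hPW0 hPW (⟨t, ht⟩ : Fin T)
    (fun ω v => Ξ (Zh f0 f g t ω) (Uh f0 f g t ω) (fun i => Xp f0 f g i t ω) v.1)
    (fun ω v v' => by
      unfold Zh Uh Xp
      rw [traj_upd f0 f g (⟨t, ht⟩ : Fin T) ω v t le_rfl])
  have hQ := expect_M f0 f PZ PX PW0 PW hPW0 hPW g t ht.le (fun zh uh _ =>
    Qval f0 PW0 c F (fun z' θ' => V f0 T PW0 c F (t + 1) z' θ') t (zh (Fin.last t))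
        (thetaC f PX PW g t zh uh) (fun i => d i t zh uh))
  refine Eq.trans ?_ hQ.symm
  rw [val, ← Finset.sum_add_distrib, Finset.sum_congr rfl fun ω _ => hL ω, hfresh]
  simp only [sum_noise_fst PW0 PW hPW]
  rw [expect_M f0 f PZ PX PW0 PW hPW0 hPW g t ht.le
    (fun zh uh x => ∑ w, PW0 w * Ξ zh uh x w)]
  refine Finset.sum_congr rfl fun zh _ => Finset.sum_congr rfl fun uh _ => ?_
  simp only [mul_assoc, ← Finset.mul_sum]
  rw [normalize f PX PW hPX hPW, ← Finset.sum_mul]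
  rfl

theorem V_le (t : ℕ) (ht : t < T) (z : Z) (θ : ∀ i, X i → ℝ) (dvec : ∀ i, X i → U i) :
    V f0 T PW0 c F t z θ ≤
      Qval f0 PW0 c F (fun z' θ' => V f0 T PW0 c F (t + 1) z' θ') t z θ dvec := by
  rw [V, dif_pos ht]
  exact ciInf_le (Set.finite_range _).bddBelow dvec

theorem val_zero (hPX : ∀ i z, IsLaw (PX i z)) (g : Strategy Z X U) :
    val f0 f PZ PX PW0 PW c F g T 0 = ∑ ω : Omega T Z X W0 W, weight PZ PX PW0 PW ω *
      V f0 T PW0 c F 0 ω.1 (fun i x => PX i ω.1 x) := by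
  simp only [val, thetaC_zero f PX PW hPX]
  rfl

theorem val_last (g : Strategy Z X U) : val f0 f PZ PX PW0 PW c F g T T = 0 := by
  refine Finset.sum_eq_zero fun ω _ => ?_
  rw [V, dif_neg (lt_irrefl _), mul_zero]

theorem J_sum (g : Strategy Z X U) :
    J f0 f c (weight (T := T) PZ PX PW0 PW) g = ∑ t ∈ Finset.range T,
      ∑ ω : Omega T Z X W0 W, weight PZ PX PW0 PW ω *
        c t (Zp f0 f g t ω) (fun i => Xp f0 f g i t ω) (fun i => Up f0 f g i t ω) := by
  simp only [J, Finset.mul_sum]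
  rw [Finset.sum_comm]

end Aux

/-- (Theorem 2, dynamic programming decomposition) for the full observation
model. `F` is the deterministic belief-update map (hypothesis `hF`: under every
coordinator-form strategy, almost surely `Θ_{t+1} = F_t(Θ_t, Z_{t+1}, U_t, D_t)`). Define the
value functions `V` by backward induction (`V_T ≡ 0`, and `V_t(z,θ)` is the minimum over
decision vectors `d` of `E[c_t(z, X, U) + V_{t+1}(Z', F_t(θ, Z', U, d))]`). If the functions
`h i t` select, at every `(t, z, θ)` with `θ` in the product of simplices, a minimizer
`d = (fun i x => h i t x z θ)` of the `t`-th recursion, then the strategy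
`g̃ⁱ_t(Z_{1:t}, Xⁱ_{1:t}, U_{1:t-1}) = h i t (Xⁱ_t, Z_t, Θ_t)` (with `Θ_t` computed from the
common information via `F`) is optimal: `J(g̃) ≤ J(g)` for every strategy `g`. -/
theorem full_obs_dynamic_program
    (PZ : Z → ℝ) (PX : ∀ i, Z → X i → ℝ) (PW0 : W0 → ℝ) (PW : ∀ i, W i → ℝ)
    (hPZ : IsLaw PZ) (hPX : ∀ i z, IsLaw (PX i z))
    (hPW0 : IsLaw PW0) (hPW : ∀ i, IsLaw (PW i))
    (c : ℕ → Z → (∀ i, X i) → (∀ i, U i) → ℝ)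
    (F : ℕ → (∀ i, X i → ℝ) → Z → (∀ j, U j) → (∀ i, X i → U i) → (∀ i, X i → ℝ))
    (hF : ∀ d : CoordStrategy Z X U, ∀ t : ℕ, t + 1 < T →
      ∀ ω : Omega T Z X W0 W, weight PZ PX PW0 PW ω ≠ 0 →
        (fun i => Theta f0 f (weight PZ PX PW0 PW) (ofCoord d) i (t + 1) ω) =
          F t (fun i => Theta f0 f (weight PZ PX PW0 PW) (ofCoord d) i t ω)
            (Zp f0 f (ofCoord d) (t + 1) ω)
            (fun j => Up f0 f (ofCoord d) j t ω)
            (fun i => Dp f0 f d i t ω))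
    (h : ∀ i : Fin n, ℕ → X i → Z → (∀ j, X j → ℝ) → U i)
    (hmin : ∀ t : ℕ, t < T → ∀ (z : Z) (θ : ∀ i, X i → ℝ), (∀ i, IsLaw (θ i)) →
      ∀ dvec : ∀ i, X i → U i,
        Qval f0 PW0 c F (fun z' θ' => V f0 T PW0 c F (t + 1) z' θ') t z θ
            (fun i x => h i t x z θ) ≤
          Qval f0 PW0 c F (fun z' θ' => V f0 T PW0 c F (t + 1) z' θ') t z θ dvec) :
    ∀ g : Strategy Z X U,
      J f0 f c (weight (T := T) PZ PX PW0 PW)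
          (fun i t zh xh uh =>
            h i t (xh (Fin.last t)) (zh (Fin.last t)) (beliefOfHist PX F h t zh uh)) ≤
        J f0 f c (weight (T := T) PZ PX PW0 PW) g := by
  intro g
  obtain ⟨d, hd⟩ := exists_coord (T := T) f0 f PZ PX PW0 PW c hPX hPW0 hPW g
  refine le_trans ?_ hd
  have step := fun (d : CoordStrategy Z X U) t ht =>
    cost_add_val (T := T) f0 f PZ PX PW0 PW c F hPZ hPX hPW0 hPW hF d t ht
  have hnn := weight_nonneg (T := T) PZ PX PW0 PW hPZ hPX hPW0 hPW
  have lower : val f0 f PZ PX PW0 PW c F (ofCoord d) T 0 ≤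
      J f0 f c (weight (T := T) PZ PX PW0 PW) (ofCoord d) := by
    have : val f0 f PZ PX PW0 PW c F (ofCoord d) T 0 = ∑ t ∈ Finset.range T,
        (val f0 f PZ PX PW0 PW c F (ofCoord d) T t -
          val f0 f PZ PX PW0 PW c F (ofCoord d) T (t + 1)) := by
      rw [Finset.sum_range_sub', val_last, sub_zero]
    rw [this, J_sum]
    refine Finset.sum_le_sum fun t ht => ?_
    have ht := Finset.mem_range.1 ht
    rw [sub_le_iff_le_add, step d t ht]
    exact Finset.sum_le_sum fun ω _ => mul_le_mul_of_nonneg_left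
      (V_le f0 PW0 c F t ht _ _ _) (hnn ω)
  let dm : CoordStrategy Z X U := fun i t zh uh x =>
    h i t x (zh (Fin.last t)) (beliefOfHist PX F h t zh uh)
  -- The recursively computed belief is almost surely the true belief.
  have belief : ∀ t, t < T → ∀ ω : Omega T Z X W0 W, weight PZ PX PW0 PW ω ≠ 0 →
      beliefOfHist PX F h t (Zh f0 f (ofCoord dm) t ω) (Uh f0 f (ofCoord dm) t ω) =
        thetaC f PX PW (ofCoord dm) t (Zh f0 f (ofCoord dm) t ω)
          (Uh f0 f (ofCoord dm) t ω) := by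
    intro t
    induction t with
    | zero =>
      intro _ ω _
      rw [thetaC_zero f PX PW hPX]
      rfl
    | succ t ih =>
      intro ht ω hω
      rw [thetaC_succ f0 f PZ PX PW0 PW F hPZ hPX hPW0 hPW hF dm t ht ω hω,
        ← ih (by omega) ω hω]
      have hz : (fun s : Fin (t + 1) => Zh f0 f (ofCoord dm) (t + 1) ω s.castSucc) =
          Zh f0 f (ofCoord dm) t ω := by
        funext s; rw [Zh_apply, Zh_apply]; rfl
      have hu : (fun s : Fin t => Uh f0 f (ofCoord dm) (t + 1) ω s.castSucc) =
          Uh f0 f (ofCoord dm) t ω := by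
        rw [Uh_succ]; funext s; simp
      have hul : Uh f0 f (ofCoord dm) (t + 1) ω (Fin.last t) =
          fun j => Up f0 f (ofCoord dm) j t ω := by
        rw [Uh_succ, Fin.snoc_last]
      rw [beliefOfHist]
      simp only [hz, hu, hul]
      rw [show Zh f0 f (ofCoord dm) (t + 1) ω (Fin.last t).castSucc =
        Zh f0 f (ofCoord dm) t ω (Fin.last t) from congrFun hz (Fin.last t)]
      rfl
  have upper : J f0 f c (weight (T := T) PZ PX PW0 PW) (ofCoord dm) =
      val f0 f PZ PX PW0 PW c F (ofCoord dm) T 0 := by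
    have : val f0 f PZ PX PW0 PW c F (ofCoord dm) T 0 = ∑ t ∈ Finset.range T,
        (val f0 f PZ PX PW0 PW c F (ofCoord dm) T t -
          val f0 f PZ PX PW0 PW c F (ofCoord dm) T (t + 1)) := by
      rw [Finset.sum_range_sub', val_last, sub_zero]
    rw [this, J_sum]
    refine Finset.sum_congr rfl fun t ht => ?_
    have ht := Finset.mem_range.1 ht
    rw [eq_sub_iff_add_eq, step dm t ht]
    refine Finset.sum_congr rfl fun ω _ => ?_
    by_cases hω : weight PZ PX PW0 PW ω = 0
    · rw [hω, zero_mul, zero_mul]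
    congr 1
    refine le_antisymm ?_ (V_le f0 PW0 c F t ht _ _ _)
    rw [V, dif_pos ht]
    refine le_ciInf fun dvec => ?_
    have hm := hmin t ht (Zp f0 f (ofCoord dm) t ω) _
      (thetaC_isLaw f0 f PZ PX PW0 PW hPZ hPX hPW0 hPW (ofCoord dm) t ht.le ω hω) dvec
    refine le_trans (le_of_eq ?_) hm
    congr 1
    funext i x
    simp only [dm]
    rw [← belief t ht ω hω]
    rfl
  calc _ = J f0 f c (weight (T := T) PZ PX PW0 PW) (ofCoord dm) := rfl
    _ = val f0 f PZ PX PW0 PW c F (ofCoord d) T 0 := by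
        rw [upper, val_zero f0 f PZ PX PW0 PW c F hPX, val_zero f0 f PZ PX PW0 PW c F hPX]
    _ ≤ _ := lower

end ControlSharing
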